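/- For every τ, σ > 0, every α > 0 and every η ≥ 1, there exists a distribution P on (Y,X) ∈ ℝ² with Y|X Gaussian with conditional mean Xβ and positive conditional variance, such that: (i) inf over homoscedastic Gaussian linear-model laws P̃ of KL(P̃‖P) is at most α; (ii) Var_P(X) = τ²; (iii) E_P[Var_P(Y|X)] = σ²; and (iv) writing V_P(γ) = E_P[X²/ν_γ(X)]^{−2} E_P[Var_P(Y|X) X²/ν_γ(X)²] for the weight class ν_γ(x) = γ₁1_{[0,∞)}(x) + γ₂1_{(−∞,0)}(x), the EQML- and GEE-optimal dispersions γ_{EQML}, γ_{GEE} satisfy (V_P(γ_{EQML}) ∧ V_P(γ_{GEE})) / inf_{γ} V_P(γ) ≥ η. -/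

import Mathlib

open MeasureTheory

/-- Density of N(m, v) at y. -/
noncomputable def npdf (m v y : ℝ) : ℝ :=
  (Real.sqrt (2 * Real.pi * v))⁻¹ * Real.exp (-((y - m) ^ 2) / (2 * v))

/-- The piecewise-constant working variance class ν_γ(x) = γ₁1_{x≥0} + γ₂1_{x<0}. -/
noncomputable def nuw (γ : ℝ × ℝ) (x : ℝ) : ℝ := if 0 ≤ x then γ.1 else γ.2

/-- Sandwich (asymptotic) variance of the weighted least squares estimator with
working variance ν_γ, under X-density p and conditional variance s. -/
noncomputable def Vsand (p s : ℝ → ℝ) (γ : ℝ × ℝ) : ℝ :=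
  ((∫ x, x ^ 2 / nuw γ x * p x)⁻¹) ^ 2 * ∫ x, s x * x ^ 2 / (nuw γ x) ^ 2 * p x

/-- Population EQML (Gaussian quasi-likelihood) dispersion objective. -/
noncomputable def Leqml (p s : ℝ → ℝ) (γ : ℝ × ℝ) : ℝ :=
  ∫ x, (Real.log (nuw γ x) + s x / nuw γ x) * p x

/-- Population GEE dispersion objective. -/
noncomputable def Lgee (p s : ℝ → ℝ) (γ : ℝ × ℝ) : ℝ :=
  ∫ x, (nuw γ x - s x) ^ 2 * p x

/-!
Start from homoscedastic errors of variance `c` and lower the variance on `0 ≤ X < a` by the factor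
`e^{-α}`, moving the missing variance onto the tail `a ≤ X`. Both the EQML and the GEE criterion see
the law only through the conditional means of `Var(Y|X)` given `0 ≤ X` and given `X < 0`, which are
both still `c`, so both choose `γ₁ = γ₂`. The tail carries a fixed share of the variance, so its
contribution to `E[Var(Y|X) X²]` is at least of order `a²`, whereas the optimal weights, which
discount the half-line `0 ≤ X`, keep the sandwich variance bounded. The divergence stays small:
the tail has probability `δ → 0` and contributes only `δ log (1 + k / δ) → 0`.
-/

open Set Filter Topology ProbabilityTheory

section HalfLine

/-- The pair of integrals of `f` over `[0, ∞)` and `(-∞, 0)`, ordered like the dispersion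
parameters `(γ₁, γ₂)`. All dispersion criteria depend on the law only through such pairs. -/
noncomputable def halfLineIntegrals (f : ℝ → ℝ) : ℝ × ℝ :=
  (∫ x in Ici 0, f x, ∫ x in Iio 0, f x)

/-- The conditional means of `s` given `0 ≤ X` and given `X < 0`, for `X` with density `p`. -/
noncomputable def halfLineMeans (p s : ℝ → ℝ) : ℝ × ℝ :=
  ((halfLineIntegrals fun x => s x * p x).1 / (halfLineIntegrals p).1,
    (halfLineIntegrals fun x => s x * p x).2 / (halfLineIntegrals p).2)

lemma integral_eq_halfLineIntegrals_add {f : ℝ → ℝ} (hf : Integrable f) :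
    ∫ x, f x = (halfLineIntegrals f).1 + (halfLineIntegrals f).2 := by
  rw [← integral_add_compl measurableSet_Ici hf, compl_Ici, halfLineIntegrals]

lemma integral_comp_nuw {F : ℝ → ℝ → ℝ} {γ : ℝ × ℝ} (h₁ : Integrable (F γ.1))
    (h₂ : Integrable (F γ.2)) :
    ∫ x, F (nuw γ x) x = (halfLineIntegrals (F γ.1)).1 + (halfLineIntegrals (F γ.2)).2 := by
  have on_right : EqOn (F γ.1) (fun x => F (nuw γ x) x) (Ici 0) := fun x hx => by
    simp only [nuw, if_pos (mem_Ici.1 hx)]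
  have on_left : EqOn (F γ.2) (fun x => F (nuw γ x) x) (Iio 0) := fun x hx => by
    simp only [nuw, if_neg (not_le.2 (mem_Iio.1 hx))]
  have hF : Integrable fun x => F (nuw γ x) x := by
    rw [← integrableOn_univ, ← Ici_union_Iio (a := (0 : ℝ))]
    exact (h₁.integrableOn.congr_fun on_right measurableSet_Ici).union
      (h₂.integrableOn.congr_fun on_left measurableSet_Iio)
  rw [integral_eq_halfLineIntegrals_add hF]
  exact congrArg₂ (· + ·) (setIntegral_congr_fun measurableSet_Ici on_right).symm
    (setIntegral_congr_fun measurableSet_Iio on_left).symm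

lemma setIntegral_pos_of_forall_ne_zero {f : ℝ → ℝ} {A : Set ℝ} (hf : Integrable f)
    (hpos : ∀ x ≠ 0, 0 < f x) (hA : volume A ≠ 0) : 0 < ∫ x in A, f x := by
  have hae : ∀ᵐ x ∂volume.restrict A, 0 < f x :=
    ae_restrict_of_ae <| (ae_iff.2 (by simp) : ∀ᵐ x : ℝ, x ≠ 0).mono hpos
  have hsupp : Function.support f =ᵐ[volume.restrict A] univ :=
    eventuallyEq_univ.2 (hae.mono fun x hx => hx.ne')
  rw [integral_pos_iff_support_of_nonneg_ae (hae.mono fun x hx => hx.le) hf.integrableOn,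
    pos_iff_ne_zero, measure_congr hsupp, Measure.restrict_apply_univ]
  exact hA

lemma halfLineIntegrals_pos {f : ℝ → ℝ} (hf : Integrable f) (hpos : ∀ x ≠ 0, 0 < f x) :
    0 < (halfLineIntegrals f).1 ∧ 0 < (halfLineIntegrals f).2 :=
  ⟨setIntegral_pos_of_forall_ne_zero hf hpos (by simp),
    setIntegral_pos_of_forall_ne_zero hf hpos (by simp)⟩

lemma setIntegral_Ici_pos {p : ℝ → ℝ} (hpi : Integrable p) (hp : ∀ x, 0 < p x) (t : ℝ) :
    0 < ∫ x in Ici t, p x :=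
  setIntegral_pos_of_forall_ne_zero hpi (fun x _ => hp x) (by simp)

end HalfLine

section Minimizers

/-- `γ` minimizes the dispersion criterion `L` over the open positive quadrant. -/
def IsDispersionMinimizer (L : ℝ × ℝ → ℝ) (γ : ℝ × ℝ) : Prop :=
  0 < γ.1 ∧ 0 < γ.2 ∧ ∀ γ' : ℝ × ℝ, 0 < γ'.1 → 0 < γ'.2 → L γ ≤ L γ'

lemma isDispersionMinimizer_iff_of_separable {L : ℝ × ℝ → ℝ} {f g : ℝ → ℝ} {a b : ℝ}
    (hL : ∀ γ : ℝ × ℝ, 0 < γ.1 → 0 < γ.2 → L γ = f γ.1 + g γ.2) (ha : 0 < a) (hb : 0 < b)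
    (hf : ∀ t, 0 < t → t ≠ a → f a < f t) (hg : ∀ t, 0 < t → t ≠ b → g b < g t)
    {γ : ℝ × ℝ} : IsDispersionMinimizer L γ ↔ γ = (a, b) := by
  have hf' : ∀ t, 0 < t → f a ≤ f t := fun t ht => by
    rcases eq_or_ne t a with rfl | hne
    exacts [le_rfl, (hf t ht hne).le]
  have hg' : ∀ t, 0 < t → g b ≤ g t := fun t ht => by
    rcases eq_or_ne t b with rfl | hne
    exacts [le_rfl, (hg t ht hne).le]
  constructor
  · rintro ⟨h₁, h₂, hmin⟩
    have hle := hmin (a, b) ha hb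
    rw [hL γ h₁ h₂, hL (a, b) ha hb] at hle
    by_contra hne
    rcases not_and_or.1 (mt Prod.ext_iff.2 hne) with hne | hne
    · linarith [hf _ h₁ hne, hg' _ h₂]
    · linarith [hf' _ h₁, hg _ h₂ hne]
  · rintro rfl
    refine ⟨ha, hb, fun γ' h₁ h₂ => ?_⟩
    rw [hL γ' h₁ h₂, hL (a, b) ha hb]
    exact add_le_add (hf' _ h₁) (hg' _ h₂)

lemma log_mul_add_div_lt {m S t : ℝ} (hm : 0 < m) (hS : 0 < S) (ht : 0 < t) (hne : t ≠ S / m) :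
    Real.log (S / m) * m + S / (S / m) < Real.log t * m + S / t := by
  have hratio : S / m / t ≠ 1 := by rwa [ne_eq, div_eq_one_iff_eq ht.ne', eq_comm]
  have hlog := Real.log_lt_sub_one_of_pos (by positivity) hratio
  rw [Real.log_div (by positivity) ht.ne'] at hlog
  calc Real.log (S / m) * m + S / (S / m)
      = Real.log t * m + (Real.log (S / m) - Real.log t) * m + m := by field_simp; ring
    _ < Real.log t * m + (S / m / t - 1) * m + m := by gcongr
    _ = Real.log t * m + S / t := by field_simp; ring

lemma sq_mul_sub_lt {m S t : ℝ} (hm : 0 < m) (hne : t ≠ S / m) :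
    (S / m) ^ 2 * m - 2 * (S / m) * S < t ^ 2 * m - 2 * t * S := by
  have hsq : 0 < m * (t - S / m) ^ 2 := by
    have := sub_ne_zero.2 hne
    positivity
  have expand : m * (t - S / m) ^ 2
      = t ^ 2 * m - 2 * t * S - ((S / m) ^ 2 * m - 2 * (S / m) * S) := by field_simp; ring
  linarith

variable {p s : ℝ → ℝ}

lemma Leqml_eq (hp : Integrable p) (hsp : Integrable fun x => s x * p x) (γ : ℝ × ℝ) :
    Leqml p s γ =
      (Real.log γ.1 * (halfLineIntegrals p).1 + (halfLineIntegrals fun x => s x * p x).1 / γ.1) +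
      (Real.log γ.2 * (halfLineIntegrals p).2 +
        (halfLineIntegrals fun x => s x * p x).2 / γ.2) := by
  have hF : ∀ t, (fun x => (Real.log t + s x / t) * p x)
      = fun x => Real.log t * p x + s x * p x / t := fun t => by ext x; ring
  have hint : ∀ t, Integrable fun x => (Real.log t + s x / t) * p x := fun t => by
    rw [hF]; exact (hp.const_mul _).add (hsp.div_const _)
  rw [Leqml, integral_comp_nuw (F := fun t x => (Real.log t + s x / t) * p x) (hint _) (hint _)]
  simp only [halfLineIntegrals, hF]
  rw [integral_add (hp.const_mul _).integrableOn (hsp.div_const _).integrableOn,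
    integral_add (hp.const_mul _).integrableOn (hsp.div_const _).integrableOn]
  simp only [integral_const_mul, integral_div]

lemma Lgee_eq (hp : Integrable p) (hsp : Integrable fun x => s x * p x)
    (hs2p : Integrable fun x => s x ^ 2 * p x) (γ : ℝ × ℝ) :
    Lgee p s γ =
      (γ.1 ^ 2 * (halfLineIntegrals p).1 - 2 * γ.1 * (halfLineIntegrals fun x => s x * p x).1 +
        (halfLineIntegrals fun x => s x ^ 2 * p x).1) +
      (γ.2 ^ 2 * (halfLineIntegrals p).2 - 2 * γ.2 * (halfLineIntegrals fun x => s x * p x).2 +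
        (halfLineIntegrals fun x => s x ^ 2 * p x).2) := by
  have hF : ∀ t, (fun x => (t - s x) ^ 2 * p x)
      = fun x => t ^ 2 * p x - 2 * t * (s x * p x) + s x ^ 2 * p x := fun t => by ext x; ring
  have hlin : ∀ t, Integrable fun x => t ^ 2 * p x - 2 * t * (s x * p x) := fun t =>
    (hp.const_mul _).sub (hsp.const_mul _)
  have hint : ∀ t, Integrable fun x => (t - s x) ^ 2 * p x := fun t => by
    rw [hF]; exact (hlin t).add hs2p
  rw [Lgee, integral_comp_nuw (F := fun t x => (t - s x) ^ 2 * p x) (hint _) (hint _)]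
  simp only [halfLineIntegrals, hF]
  rw [integral_add (hlin _).integrableOn hs2p.integrableOn,
    integral_add (hlin _).integrableOn hs2p.integrableOn,
    integral_sub (hp.const_mul _).integrableOn (hsp.const_mul _).integrableOn,
    integral_sub (hp.const_mul _).integrableOn (hsp.const_mul _).integrableOn]
  simp only [integral_const_mul]

lemma isDispersionMinimizer_Leqml_iff (hp : Integrable p) (hsp : Integrable fun x => s x * p x)
    (hp_pos : ∀ x, 0 < p x) (hs_pos : ∀ x, 0 < s x) {γ : ℝ × ℝ} :
    IsDispersionMinimizer (Leqml p s) γ ↔ γ = halfLineMeans p s := by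
  obtain ⟨m₁, m₂⟩ := halfLineIntegrals_pos hp fun x _ => hp_pos x
  obtain ⟨S₁, S₂⟩ := halfLineIntegrals_pos hsp fun x _ => mul_pos (hs_pos x) (hp_pos x)
  exact isDispersionMinimizer_iff_of_separable
    (f := fun t => Real.log t * (halfLineIntegrals p).1 +
      (halfLineIntegrals fun x => s x * p x).1 / t)
    (g := fun t => Real.log t * (halfLineIntegrals p).2 +
      (halfLineIntegrals fun x => s x * p x).2 / t)
    (fun γ _ _ => Leqml_eq hp hsp γ) (div_pos S₁ m₁) (div_pos S₂ m₂)
    (fun _ => log_mul_add_div_lt m₁ S₁) (fun _ => log_mul_add_div_lt m₂ S₂)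

lemma isDispersionMinimizer_Lgee_iff (hp : Integrable p) (hsp : Integrable fun x => s x * p x)
    (hs2p : Integrable fun x => s x ^ 2 * p x) (hp_pos : ∀ x, 0 < p x) (hs_pos : ∀ x, 0 < s x)
    {γ : ℝ × ℝ} : IsDispersionMinimizer (Lgee p s) γ ↔ γ = halfLineMeans p s := by
  obtain ⟨m₁, m₂⟩ := halfLineIntegrals_pos hp fun x _ => hp_pos x
  obtain ⟨S₁, S₂⟩ := halfLineIntegrals_pos hsp fun x _ => mul_pos (hs_pos x) (hp_pos x)
  exact isDispersionMinimizer_iff_of_separable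
    (f := fun t => t ^ 2 * (halfLineIntegrals p).1 -
      2 * t * (halfLineIntegrals fun x => s x * p x).1 +
      (halfLineIntegrals fun x => s x ^ 2 * p x).1)
    (g := fun t => t ^ 2 * (halfLineIntegrals p).2 -
      2 * t * (halfLineIntegrals fun x => s x * p x).2 +
      (halfLineIntegrals fun x => s x ^ 2 * p x).2)
    (fun γ _ _ => Lgee_eq hp hsp hs2p γ) (div_pos S₁ m₁) (div_pos S₂ m₂)
    (fun _ _ hne => add_lt_add_left (sq_mul_sub_lt m₁ hne) _)
    (fun _ _ hne => add_lt_add_left (sq_mul_sub_lt m₂ hne) _)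

end Minimizers

section Sandwich

variable {p s : ℝ → ℝ}

lemma Vsand_eq (hq : Integrable fun x => x ^ 2 * p x) (hw : Integrable fun x => s x * (x ^ 2 * p x))
    (γ : ℝ × ℝ) :
    Vsand p s γ =
      (((halfLineIntegrals fun x => x ^ 2 * p x).1 / γ.1 +
        (halfLineIntegrals fun x => x ^ 2 * p x).2 / γ.2)⁻¹) ^ 2 *
      ((halfLineIntegrals fun x => s x * (x ^ 2 * p x)).1 / γ.1 ^ 2 +
        (halfLineIntegrals fun x => s x * (x ^ 2 * p x)).2 / γ.2 ^ 2) := by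
  have hQ : ∀ t, (fun x => x ^ 2 / t * p x) = fun x => x ^ 2 * p x / t := fun t => by ext x; ring
  have hW : ∀ t, (fun x => s x * x ^ 2 / t ^ 2 * p x) = fun x => s x * (x ^ 2 * p x) / t ^ 2 :=
    fun t => by ext x; ring
  have hQint : ∀ t, Integrable fun x => x ^ 2 / t * p x := fun t => by
    rw [hQ]; exact hq.div_const t
  have hWint : ∀ t, Integrable fun x => s x * x ^ 2 / t ^ 2 * p x := fun t => by
    rw [hW]; exact hw.div_const (t ^ 2)
  rw [Vsand, integral_comp_nuw (F := fun t x => x ^ 2 / t * p x) (hQint _) (hQint _),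
    integral_comp_nuw (F := fun t x => s x * x ^ 2 / t ^ 2 * p x) (hWint _) (hWint _)]
  simp only [halfLineIntegrals, hQ, hW, integral_div]

lemma inv_le_sandwich {q₁ q₂ w₁ w₂ x y : ℝ} (hq₁ : 0 < q₁) (hq₂ : 0 < q₂) (hw₁ : 0 < w₁)
    (hw₂ : 0 < w₂) (hx : 0 < x) (hy : 0 < y) :
    (q₁ ^ 2 / w₁ + q₂ ^ 2 / w₂)⁻¹ ≤ ((q₁ / x + q₂ / y)⁻¹) ^ 2 * (w₁ / x ^ 2 + w₂ / y ^ 2) := by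
  have cauchy_schwarz : (q₁ / x + q₂ / y) ^ 2 ≤
      (q₁ ^ 2 / w₁ + q₂ ^ 2 / w₂) * (w₁ / x ^ 2 + w₂ / y ^ 2) := by
    have gap : (q₁ ^ 2 / w₁ + q₂ ^ 2 / w₂) * (w₁ / x ^ 2 + w₂ / y ^ 2) - (q₁ / x + q₂ / y) ^ 2
        = (q₁ * w₂ / y - q₂ * w₁ / x) ^ 2 / (w₁ * w₂) := by field_simp; ring
    have : 0 ≤ (q₁ * w₂ / y - q₂ * w₁ / x) ^ 2 / (w₁ * w₂) := by positivity
    linarith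
  rw [inv_pow, inv_mul_eq_div, le_div_iff₀ (by positivity), inv_mul_le_iff₀ (by positivity)]
  exact cauchy_schwarz

lemma iInf_Vsand (hp_pos : ∀ x, 0 < p x) (hs_pos : ∀ x, 0 < s x)
    (hq : Integrable fun x => x ^ 2 * p x) (hw : Integrable fun x => s x * (x ^ 2 * p x)) :
    (⨅ γ : {γ : ℝ × ℝ // 0 < γ.1 ∧ 0 < γ.2}, Vsand p s γ.1) =
      ((halfLineIntegrals fun x => x ^ 2 * p x).1 ^ 2 /
          (halfLineIntegrals fun x => s x * (x ^ 2 * p x)).1 +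
        (halfLineIntegrals fun x => x ^ 2 * p x).2 ^ 2 /
          (halfLineIntegrals fun x => s x * (x ^ 2 * p x)).2)⁻¹ := by
  have q_pos : ∀ x ≠ 0, 0 < x ^ 2 * p x := fun x _ => mul_pos (by positivity) (hp_pos x)
  obtain ⟨hq₁, hq₂⟩ := halfLineIntegrals_pos hq q_pos
  obtain ⟨hw₁, hw₂⟩ := halfLineIntegrals_pos hw fun x hx => mul_pos (hs_pos x) (q_pos x hx)
  have hV := Vsand_eq hq hw
  set q := halfLineIntegrals fun x => x ^ 2 * p x
  set w := halfLineIntegrals fun x => s x * (x ^ 2 * p x)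
  refine IsLeast.csInf_eq ⟨⟨⟨(w.1 / q.1, w.2 / q.2), by positivity, by positivity⟩, ?_⟩, ?_⟩
  · simp only [hV]
    field_simp
  · rintro _ ⟨⟨γ, hγ₁, hγ₂⟩, rfl⟩
    exact (inv_le_sandwich hq₁ hq₂ hw₁ hw₂ hγ₁ hγ₂).trans_eq (hV γ).symm

-- With `qᵢ`, `wᵢ` the entries of the two pairs, the ratio is
-- `(w₁ + w₂) (q₁² / w₁ + q₂² / w₂) / (q₁ + q₂)²`, hence at least `w₁ q₂² / (w₂ (q₁ + q₂)²)`.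
lemma le_Vsand_const_div_iInf {c η : ℝ} (hc : 0 < c) (hp_pos : ∀ x, 0 < p x)
    (hs_pos : ∀ x, 0 < s x) (hq : Integrable fun x => x ^ 2 * p x)
    (hw : Integrable fun x => s x * (x ^ 2 * p x))
    (h : η * (halfLineIntegrals fun x => s x * (x ^ 2 * p x)).2 * (∫ x, x ^ 2 * p x) ^ 2 ≤
      (halfLineIntegrals fun x => s x * (x ^ 2 * p x)).1 *
        (halfLineIntegrals fun x => x ^ 2 * p x).2 ^ 2) :
    η ≤ Vsand p s (c, c) / ⨅ γ : {γ : ℝ × ℝ // 0 < γ.1 ∧ 0 < γ.2}, Vsand p s γ.1 := by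
  rw [integral_eq_halfLineIntegrals_add hq] at h
  rw [iInf_Vsand hp_pos hs_pos hq hw, Vsand_eq hq hw]
  have q_pos : ∀ x ≠ 0, 0 < x ^ 2 * p x := fun x _ => mul_pos (by positivity) (hp_pos x)
  obtain ⟨hq₁, hq₂⟩ := halfLineIntegrals_pos hq q_pos
  obtain ⟨hw₁, hw₂⟩ := halfLineIntegrals_pos hw fun x hx => mul_pos (hs_pos x) (q_pos x hx)
  set q := halfLineIntegrals fun x => x ^ 2 * p x
  set w := halfLineIntegrals fun x => s x * (x ^ 2 * p x)
  have leading_term : w.1 * q.2 ^ 2 / (w.2 * (q.1 + q.2) ^ 2) ≤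
      (w.1 + w.2) * (q.1 ^ 2 / w.1 + q.2 ^ 2 / w.2) / (q.1 + q.2) ^ 2 := by
    rw [← div_div, mul_div_assoc]
    gcongr
    · exact le_add_of_nonneg_right hw₂.le
    · exact le_add_of_nonneg_left (by positivity)
  calc η ≤ w.1 * q.2 ^ 2 / (w.2 * (q.1 + q.2) ^ 2) := by
        rwa [le_div_iff₀ (by positivity), ← mul_assoc]
    _ ≤ (w.1 + w.2) * (q.1 ^ 2 / w.1 + q.2 ^ 2 / w.2) / (q.1 + q.2) ^ 2 := leading_term
    _ = ((q.1 / c + q.2 / c)⁻¹) ^ 2 * (w.1 / c ^ 2 + w.2 / c ^ 2) /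
          (q.1 ^ 2 / w.1 + q.2 ^ 2 / w.2)⁻¹ := by
        rw [div_inv_eq_mul]
        field_simp

end Sandwich

section GaussianDensity

variable {m v : ℝ}

lemma npdf_eq_gaussianPDFReal (hv : 0 ≤ v) : npdf m v = gaussianPDFReal m v.toNNReal := by
  ext y
  rw [npdf, gaussianPDFReal, Real.coe_toNNReal v hv]

lemma npdf_pos (hv : 0 < v) (y : ℝ) : 0 < npdf m v y := by
  unfold npdf
  positivity

lemma npdf_eq_npdf_zero_sub (y : ℝ) : npdf m v y = npdf 0 v (y - m) := by
  simp only [npdf, sub_zero]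

lemma integrable_mul_npdf_iff (hv : 0 < v) {f : ℝ → ℝ} :
    Integrable (fun y => f y * npdf m v y) ↔ Integrable f (gaussianReal m v.toNNReal) := by
  have hv' : v.toNNReal ≠ 0 := (Real.toNNReal_pos.2 hv).ne'
  rw [gaussianReal_of_var_ne_zero m hv',
    integrable_withDensity_iff_integrable_smul' (measurable_gaussianPDF m _)
      (ae_of_all _ fun _ => gaussianPDF_lt_top)]
  simp only [toReal_gaussianPDF, smul_eq_mul, npdf_eq_gaussianPDFReal hv.le, mul_comm]

lemma integral_mul_npdf (hv : 0 < v) (f : ℝ → ℝ) :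
    ∫ y, f y * npdf m v y = ∫ y, f y ∂gaussianReal m v.toNNReal := by
  rw [integral_gaussianReal_eq_integral_smul (Real.toNNReal_pos.2 hv).ne']
  simp only [smul_eq_mul, npdf_eq_gaussianPDFReal hv.le, mul_comm]

lemma integrable_npdf (hv : 0 < v) : Integrable (npdf m v) := by
  rw [npdf_eq_gaussianPDFReal hv.le]
  exact integrable_gaussianPDFReal m _

lemma integral_npdf (hv : 0 < v) : ∫ y, npdf m v y = 1 := by
  rw [npdf_eq_gaussianPDFReal hv.le]
  exact integral_gaussianPDFReal_eq_one m (Real.toNNReal_pos.2 hv).ne'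

lemma integral_id_mul_npdf (hv : 0 < v) : ∫ y, y * npdf m v y = m := by
  rw [integral_mul_npdf hv, integral_id_gaussianReal]

lemma integrable_sq_mul_npdf (hv : 0 < v) : Integrable fun y => y ^ 2 * npdf m v y :=
  (integrable_mul_npdf_iff hv).2 (memLp_id_gaussianReal 2).integrable_sq

lemma integral_sq_mul_npdf_zero (hv : 0 < v) : ∫ y, y ^ 2 * npdf 0 v y = v := by
  rw [integral_mul_npdf hv,
    ← variance_of_integral_eq_zero aemeasurable_id' integral_id_gaussianReal,
    variance_fun_id_gaussianReal, Real.coe_toNNReal v hv.le]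

end GaussianDensity

section KullbackLeibler

/-- The Kullback–Leibler divergence `KL(P₁‖P₂)` of two joint laws of `(X, Y)` with common
`X`-density `p` and Gaussian conditional laws `Y | X ∼ N(m X, v X)` under `P₁`,
`Y | X ∼ N(m X, s X)` under `P₂`. -/
noncomputable def condGaussianKL (p m v s : ℝ → ℝ) : ℝ :=
  ∫ z : ℝ × ℝ, (p z.1 * npdf (m z.1) (v z.1) z.2) *
    Real.log ((p z.1 * npdf (m z.1) (v z.1) z.2) / (p z.1 * npdf (m z.1) (s z.1) z.2))

lemma log_npdf {v : ℝ} (hv : 0 < v) (m y : ℝ) :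
    Real.log (npdf m v y) = -(Real.log (2 * Real.pi) + Real.log v) / 2 - (y - m) ^ 2 / (2 * v) := by
  rw [npdf, Real.log_mul (by positivity) (by positivity), Real.log_exp, Real.log_inv,
    Real.log_sqrt (by positivity), Real.log_mul (by positivity) hv.ne']
  ring

lemma npdf_mul_log_div {v w : ℝ} (hv : 0 < v) (hw : 0 < w) (m y : ℝ) :
    npdf m v y * Real.log (npdf m v y / npdf m w y) =
      Real.log (w / v) / 2 * npdf m v y +
        (w⁻¹ - v⁻¹) / 2 * ((y - m) ^ 2 * npdf m v y) := by
  rw [Real.log_div (npdf_pos hv y).ne' (npdf_pos hw y).ne', log_npdf hv, log_npdf hw,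
    Real.log_div hw.ne' hv.ne']
  field_simp
  ring

lemma measurePreserving_prod_sub {m : ℝ → ℝ} (hm : Measurable m) :
    MeasurePreserving fun z : ℝ × ℝ => (z.1, z.2 - m z.1) :=
  (MeasurePreserving.id volume).skew_product (g := fun x y => y - m x) (by fun_prop)
    (ae_of_all _ fun x => (measurePreserving_sub_right volume (m x)).map_eq)

lemma integrable_mul_comp_sub {m a g : ℝ → ℝ} (hm : Measurable m) (ha : Integrable a)
    (hg : Integrable g) : Integrable fun z : ℝ × ℝ => a z.1 * g (z.2 - m z.1) :=
  (measurePreserving_prod_sub hm).integrable_comp_of_integrable (ha.mul_prod hg)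

lemma integral_mul_comp_sub {m a g : ℝ → ℝ} (hm : Measurable m) (ha : Integrable a)
    (hg : Integrable g) :
    ∫ z : ℝ × ℝ, a z.1 * g (z.2 - m z.1) = (∫ x, a x) * ∫ y, g y := by
  have hshear := measurePreserving_prod_sub hm
  have hF : Integrable fun z : ℝ × ℝ => a z.1 * g z.2 := ha.mul_prod hg
  rw [← integral_prod_mul a g, ← Measure.volume_eq_prod]
  calc ∫ z : ℝ × ℝ, a z.1 * g (z.2 - m z.1)
      = ∫ z, a z.1 * g z.2 ∂(volume : Measure (ℝ × ℝ)).map fun z => (z.1, z.2 - m z.1) :=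
        (integral_map hshear.aemeasurable
          (by rw [hshear.map_eq]; exact hF.aestronglyMeasurable)).symm
    _ = ∫ z : ℝ × ℝ, a z.1 * g z.2 := by rw [hshear.map_eq]

variable {p m s : ℝ → ℝ} {v : ℝ}

lemma condGaussianKL_const_eq (hp_pos : ∀ x, 0 < p x) (hs_pos : ∀ x, 0 < s x) (hv : 0 < v)
    (hm : Measurable m) (hp : Integrable p)
    (hlog : Integrable fun x => Real.log (s x / v) * p x)
    (hinv : Integrable fun x => (s x)⁻¹ * p x) :
    condGaussianKL p m (fun _ => v) s =
      (∫ x, Real.log (s x / v) * p x) / 2 + (∫ x, ((s x)⁻¹ - v⁻¹) * p x) / 2 * v := by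
  have integrand_eq : ∀ z : ℝ × ℝ,
      (p z.1 * npdf (m z.1) v z.2) *
        Real.log ((p z.1 * npdf (m z.1) v z.2) / (p z.1 * npdf (m z.1) (s z.1) z.2)) =
      (Real.log (s z.1 / v) * p z.1 / 2) * npdf 0 v (z.2 - m z.1) +
        (((s z.1)⁻¹ - v⁻¹) * p z.1 / 2) *
          ((z.2 - m z.1) ^ 2 * npdf 0 v (z.2 - m z.1)) := fun z => by
    rw [mul_div_mul_left _ _ (hp_pos _).ne', mul_assoc, npdf_mul_log_div hv (hs_pos _),
      npdf_eq_npdf_zero_sub (v := v)]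
    ring
  have hA : Integrable fun x => Real.log (s x / v) * p x / 2 := hlog.div_const 2
  have hB : Integrable fun x => ((s x)⁻¹ - v⁻¹) * p x / 2 := by
    simp only [sub_mul]
    exact (hinv.sub (hp.const_mul v⁻¹)).div_const 2
  have hN : Integrable (npdf 0 v) := integrable_npdf hv
  have hN2 : Integrable fun y => y ^ 2 * npdf 0 v y := integrable_sq_mul_npdf hv
  simp only [condGaussianKL, integrand_eq]
  rw [integral_add (integrable_mul_comp_sub hm hA hN) (integrable_mul_comp_sub hm hB hN2),
    integral_mul_comp_sub hm hA hN, integral_mul_comp_sub hm hB hN2, integral_npdf hv,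
    integral_sq_mul_npdf_zero hv, integral_div, integral_div, mul_one]

lemma condGaussianKL_const_le (hp_pos : ∀ x, 0 < p x) (hv : 0 < v) (hvs : ∀ x, v ≤ s x)
    (hm : Measurable m) (hp : Integrable p)
    (hlog : Integrable fun x => Real.log (s x / v) * p x)
    (hinv : Integrable fun x => (s x)⁻¹ * p x) :
    condGaussianKL p m (fun _ => v) s ≤ (∫ x, Real.log (s x / v) * p x) / 2 := by
  have hinv_nonpos : ∫ x, ((s x)⁻¹ - v⁻¹) * p x ≤ 0 := integral_nonpos fun x =>
    mul_nonpos_of_nonpos_of_nonneg (sub_nonpos.2 (inv_anti₀ hv (hvs x))) (hp_pos x).le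
  rw [condGaussianKL_const_eq hp_pos (fun x => hv.trans_le (hvs x)) hv hm hp hlog hinv]
  nlinarith

end KullbackLeibler

section Spike

/-- The step function with value `l` on `(-∞, 0)`, `u` on `[0, a)` and `w` on `[a, ∞)`, for
`0 ≤ a`. -/
noncomputable def threeStep (a l u w x : ℝ) : ℝ :=
  if x < 0 then l else if x < a then u else w

variable {a l u w : ℝ}

lemma measurable_threeStep : Measurable (threeStep a l u w) :=
  .ite measurableSet_Iio measurable_const <|
    .ite measurableSet_Iio measurable_const measurable_const

lemma comp_threeStep (g : ℝ → ℝ) (x : ℝ) :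
    g (threeStep a l u w x) = threeStep a (g l) (g u) (g w) x := by
  simp only [threeStep, apply_ite g]

lemma le_threeStep {b : ℝ} (hl : b ≤ l) (hu : b ≤ u) (hw : b ≤ w) (x : ℝ) :
    b ≤ threeStep a l u w x := by
  unfold threeStep
  split_ifs <;> assumption

variable {f : ℝ → ℝ}

lemma integrable_comp_threeStep_mul (g : ℝ → ℝ) (hf : Integrable f) :
    Integrable fun x => g (threeStep a l u w x) * f x := by
  simp only [comp_threeStep g]
  refine hf.bdd_mul (c := max |g l| (max |g u| |g w|)) measurable_threeStep.aestronglyMeasurable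
    (ae_of_all _ fun x => ?_)
  rw [Real.norm_eq_abs, comp_threeStep abs]
  unfold threeStep
  split_ifs <;> simp

lemma halfLineIntegrals_threeStep_mul (ha : 0 ≤ a) (hf : Integrable f) :
    halfLineIntegrals (fun x => threeStep a l u w x * f x) =
      (u * (halfLineIntegrals f).1 + (w - u) * ∫ x in Ici a, f x,
        l * (halfLineIntegrals f).2) := by
  have on_right : EqOn (fun x => threeStep a l u w x * f x)
      (fun x => u * f x + (Ici a).indicator (fun x => (w - u) * f x) x) (Ici 0) := fun x hx => by
    rcases lt_or_ge x a with hxa | hxa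
    · simp [threeStep, hxa, not_lt.2 (mem_Ici.1 hx)]
    · simp [threeStep, hxa, not_lt.2 (mem_Ici.1 hx), not_lt.2 hxa]
      ring
  have on_left : EqOn (fun x => threeStep a l u w x * f x) (fun x => l * f x) (Iio 0) :=
    fun x hx => by simp only [threeStep, if_pos (mem_Iio.1 hx)]
  rw [halfLineIntegrals, setIntegral_congr_fun measurableSet_Ici on_right,
    setIntegral_congr_fun measurableSet_Iio on_left,
    integral_add (hf.const_mul u).integrableOn
      ((hf.const_mul (w - u)).indicator measurableSet_Ici).integrableOn,
    setIntegral_indicator measurableSet_Ici, inter_eq_self_of_subset_right (Ici_subset_Ici.2 ha)]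
  simp only [integral_const_mul, halfLineIntegrals]

/-- The conditional variance of the construction: `c` for `x < 0`, slightly smaller, namely
`c e^{-α}`, on `[0, a)`, and on `[a, ∞)` the constant that restores the conditional mean `c`
given `0 ≤ X`, for `X` with density `p`. -/
noncomputable def spikedVariance (p : ℝ → ℝ) (c α a : ℝ) : ℝ → ℝ :=
  threeStep a c (c * Real.exp (-α))
    (c * Real.exp (-α) +
      c * (1 - Real.exp (-α)) * (halfLineIntegrals p).1 / ∫ x in Ici a, p x)

variable {p : ℝ → ℝ} {c α : ℝ}

lemma mul_exp_neg_le_spikedVariance (hp : ∀ x, 0 < p x) (hc : 0 < c) (hα : 0 < α) (x : ℝ) :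
    c * Real.exp (-α) ≤ spikedVariance p c α a x := by
  have hexp : Real.exp (-α) ≤ 1 := Real.exp_le_one_iff.2 (neg_nonpos.2 hα.le)
  have hmass : ∀ t, 0 ≤ ∫ x in Ici t, p x := fun t => integral_nonneg fun x => (hp x).le
  refine le_threeStep (mul_le_of_le_one_right hc.le hexp) le_rfl
    (le_add_of_nonneg_right (div_nonneg (mul_nonneg ?_ (hmass 0)) (hmass a))) x
  exact mul_nonneg hc.le (sub_nonneg.2 hexp)

lemma spikedVariance_pos (hp : ∀ x, 0 < p x) (hc : 0 < c) (hα : 0 < α) (x : ℝ) :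
    0 < spikedVariance p c α a x :=
  (mul_pos hc (Real.exp_pos _)).trans_le (mul_exp_neg_le_spikedVariance hp hc hα x)

lemma integrable_comp_spikedVariance_mul (g : ℝ → ℝ) (hf : Integrable f) :
    Integrable fun x => g (spikedVariance p c α a x) * f x :=
  integrable_comp_threeStep_mul g hf

lemma halfLineIntegrals_spikedVariance_mul_density (hpi : Integrable p) (hp : ∀ x, 0 < p x)
    (ha : 0 ≤ a) :
    halfLineIntegrals (fun x => spikedVariance p c α a x * p x) =
      (c * (halfLineIntegrals p).1, c * (halfLineIntegrals p).2) := by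
  have hδ := setIntegral_Ici_pos hpi hp a
  unfold spikedVariance
  rw [halfLineIntegrals_threeStep_mul ha hpi]
  congr 1
  field_simp
  ring

lemma halfLineMeans_spikedVariance (hpi : Integrable p) (hp : ∀ x, 0 < p x) (ha : 0 ≤ a) :
    halfLineMeans p (spikedVariance p c α a) = (c, c) := by
  obtain ⟨h₁, h₂⟩ := halfLineIntegrals_pos hpi fun x _ => hp x
  rw [halfLineMeans, halfLineIntegrals_spikedVariance_mul_density hpi hp ha,
    mul_div_cancel_right₀ _ h₁.ne', mul_div_cancel_right₀ _ h₂.ne']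

lemma integral_spikedVariance_mul_density (hpi : Integrable p) (hp : ∀ x, 0 < p x) (ha : 0 ≤ a) :
    ∫ x, spikedVariance p c α a x * p x = c * ∫ x, p x := by
  have hint : Integrable fun x => spikedVariance p c α a x * p x :=
    integrable_comp_spikedVariance_mul id hpi
  rw [integral_eq_halfLineIntegrals_add hint, integral_eq_halfLineIntegrals_add hpi, mul_add]
  simp only [halfLineIntegrals_spikedVariance_mul_density hpi hp ha]

lemma sq_mul_setIntegral_Ici_le (hpi : Integrable p) (hp2 : Integrable fun x => x ^ 2 * p x)
    (hp : ∀ x, 0 < p x) (ha : 0 ≤ a) :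
    a ^ 2 * ∫ x in Ici a, p x ≤ ∫ x in Ici a, x ^ 2 * p x := by
  rw [← integral_const_mul]
  refine setIntegral_mono_on (hpi.const_mul _).integrableOn hp2.integrableOn measurableSet_Ici
    fun x hx => ?_
  have := hp x
  have : a ≤ x := hx
  gcongr

lemma le_halfLineIntegrals_spikedVariance_mul_sq (hpi : Integrable p)
    (hp2 : Integrable fun x => x ^ 2 * p x) (hp : ∀ x, 0 < p x) (hc : 0 < c) (hα : 0 < α)
    (ha : 0 ≤ a) :
    c * (1 - Real.exp (-α)) * (halfLineIntegrals p).1 * a ^ 2 ≤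
      (halfLineIntegrals fun x => spikedVariance p c α a x * (x ^ 2 * p x)).1 := by
  have hδ := setIntegral_Ici_pos hpi hp a
  have hP := setIntegral_Ici_pos hpi hp 0
  have hexp : 0 ≤ 1 - Real.exp (-α) := sub_nonneg.2 (Real.exp_le_one_iff.2 (neg_nonpos.2 hα.le))
  have htail := sq_mul_setIntegral_Ici_le hpi hp2 hp ha
  have hq : 0 ≤ ∫ x in Ici 0, x ^ 2 * p x :=
    integral_nonneg fun x => mul_nonneg (sq_nonneg x) (hp x).le
  unfold spikedVariance
  rw [halfLineIntegrals_threeStep_mul ha hp2]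
  simp only [halfLineIntegrals, add_sub_cancel_left]
  set δ := ∫ x in Ici a, p x
  set P := ∫ x in Ici 0, p x
  calc c * (1 - Real.exp (-α)) * P * a ^ 2
      = c * (1 - Real.exp (-α)) * P / δ * (a ^ 2 * δ) := by field_simp
    _ ≤ c * (1 - Real.exp (-α)) * P / δ * ∫ x in Ici a, x ^ 2 * p x := by gcongr
    _ ≤ _ := le_add_of_nonneg_left (by positivity)

lemma integral_log_spikedVariance_mul (hpi : Integrable p) (hc : 0 < c) (ha : 0 ≤ a) :
    ∫ x, Real.log (spikedVariance p c α a x / (c * Real.exp (-α))) * p x =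
      (∫ x in Ici a, p x) *
          Real.log (1 + (Real.exp α - 1) * (halfLineIntegrals p).1 / ∫ x in Ici a, p x) +
        α * (halfLineIntegrals p).2 := by
  have log_step : ∀ x, Real.log (spikedVariance p c α a x / (c * Real.exp (-α))) =
      threeStep a α 0
        (Real.log (1 + (Real.exp α - 1) * (halfLineIntegrals p).1 / ∫ x in Ici a, p x)) x := by
    intro x
    rw [spikedVariance, comp_threeStep fun t => Real.log (t / (c * Real.exp (-α)))]
    congr 1
    · rw [div_mul_cancel_left₀ hc.ne', Real.exp_neg, inv_inv, Real.log_exp]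
    · rw [div_self (by positivity), Real.log_one]
    · rw [add_div, div_self (by positivity), Real.exp_neg]
      congr 2
      field_simp
  have hint : Integrable fun x =>
      Real.log (spikedVariance p c α a x / (c * Real.exp (-α))) * p x :=
    integrable_comp_spikedVariance_mul (fun t => Real.log (t / (c * Real.exp (-α)))) hpi
  rw [integral_eq_halfLineIntegrals_add hint]
  simp only [log_step, halfLineIntegrals_threeStep_mul ha hpi]
  ring

end Spike

section Limits

lemma tendsto_setIntegral_Ici_nhdsGT_zero {p : ℝ → ℝ} (hpi : Integrable p) (hp : ∀ x, 0 < p x) :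
    Tendsto (fun a => ∫ x in Ici a, p x) atTop (𝓝[>] 0) := by
  refine tendsto_nhdsWithin_iff.2
    ⟨?_, Eventually.of_forall fun a => setIntegral_Ici_pos hpi hp a⟩
  simp only [integral_Ici_eq_integral_Ioi]
  exact tendsto_integral_Ioi_zero tendsto_id

lemma tendsto_mul_log_one_add_div_nhdsGT_zero {k : ℝ} (hk : 0 < k) :
    Tendsto (fun δ => δ * Real.log (1 + k / δ)) (𝓝[>] 0) (𝓝 0) := by
  have hcont : ContinuousAt (fun δ => δ * Real.log (δ + k) - δ * Real.log δ) 0 := by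
    refine .sub (continuousAt_id.mul (ContinuousAt.log (by fun_prop) (by simpa using hk.ne')))
      Real.continuous_mul_log.continuousAt
  have hlim : Tendsto (fun δ => δ * Real.log (δ + k) - δ * Real.log δ) (𝓝[>] 0) (𝓝 0) := by
    simpa using hcont.tendsto.mono_left nhdsWithin_le_nhds
  refine hlim.congr' (eventually_mem_nhdsWithin.mono fun δ (hδ : 0 < δ) => ?_)
  change δ * Real.log (δ + k) - δ * Real.log δ = δ * Real.log (1 + k / δ)
  rw [one_add_div hδ.ne', Real.log_div (by positivity) hδ.ne', mul_sub]

lemma exists_spike_location {p : ℝ → ℝ} (hpi : Integrable p) (hp : ∀ x, 0 < p x) {k C α : ℝ}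
    (hk : 0 < k) (hC : 0 < C) (hα : 0 < α) (B : ℝ) :
    ∃ a, 0 ≤ a ∧ (∫ x in Ici a, p x) * Real.log (1 + k / ∫ x in Ici a, p x) ≤ α ∧
      B ≤ C * a ^ 2 := by
  have hlog := (tendsto_mul_log_one_add_div_nhdsGT_zero hk).comp
    (tendsto_setIntegral_Ici_nhdsGT_zero hpi hp)
  have hsq : Tendsto (fun a : ℝ => C * a ^ 2) atTop atTop :=
    (tendsto_pow_atTop two_ne_zero).const_mul_atTop hC
  exact ((eventually_ge_atTop 0).and
    ((hlog.eventually_le_const hα).and (hsq.eventually_ge_atTop B))).exists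

end Limits

section Construction

variable {p : ℝ → ℝ} {c α a : ℝ}

lemma condGaussianKL_spikedVariance_le {m : ℝ → ℝ} (hpi : Integrable p) (hp : ∀ x, 0 < p x)
    (hp1 : ∫ x, p x = 1) (hm : Measurable m) (hc : 0 < c) (hα : 0 < α) (ha : 0 ≤ a)
    (hlog : (∫ x in Ici a, p x) *
      Real.log (1 + (Real.exp α - 1) * (halfLineIntegrals p).1 / ∫ x in Ici a, p x) ≤ α) :
    condGaussianKL p m (fun _ => c * Real.exp (-α)) (spikedVariance p c α a) ≤ α := by
  have left_mass_le : (halfLineIntegrals p).2 ≤ 1 := by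
    have hsum := integral_eq_halfLineIntegrals_add hpi
    have := (halfLineIntegrals_pos hpi fun x _ => hp x).1
    linarith
  calc condGaussianKL p m (fun _ => c * Real.exp (-α)) (spikedVariance p c α a)
      ≤ (∫ x, Real.log (spikedVariance p c α a x / (c * Real.exp (-α))) * p x) / 2 :=
        condGaussianKL_const_le hp (by positivity) (mul_exp_neg_le_spikedVariance hp hc hα) hm hpi
          (integrable_comp_spikedVariance_mul (fun t => Real.log (t / (c * Real.exp (-α)))) hpi)
          (integrable_comp_spikedVariance_mul (·⁻¹) hpi)
    _ ≤ (α + α * 1) / 2 := by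
        rw [integral_log_spikedVariance_mul hpi hc ha]
        gcongr
    _ = α := by ring

lemma le_Vsand_spikedVariance_div_iInf {η : ℝ} (hpi : Integrable p) (hp : ∀ x, 0 < p x)
    (hp2 : Integrable fun x => x ^ 2 * p x) (hc : 0 < c) (hα : 0 < α) (ha : 0 ≤ a)
    (h : η * (∫ x, x ^ 2 * p x) ^ 2 ≤ (1 - Real.exp (-α)) * (halfLineIntegrals p).1 *
      (halfLineIntegrals fun x => x ^ 2 * p x).2 * a ^ 2) :
    η ≤ Vsand p (spikedVariance p c α a) (c, c) /
      ⨅ γ : {γ : ℝ × ℝ // 0 < γ.1 ∧ 0 < γ.2}, Vsand p (spikedVariance p c α a) γ.1 := by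
  have hw₁ := le_halfLineIntegrals_spikedVariance_mul_sq hpi hp2 hp hc hα ha
  have hw₂ : (halfLineIntegrals fun x => spikedVariance p c α a x * (x ^ 2 * p x)).2 =
      c * (halfLineIntegrals fun x => x ^ 2 * p x).2 := by
    rw [spikedVariance, halfLineIntegrals_threeStep_mul ha hp2]
  have hq₂ := (halfLineIntegrals_pos hp2 fun x _ => mul_pos (by positivity) (hp x)).2
  refine le_Vsand_const_div_iInf hc hp (spikedVariance_pos hp hc hα) hp2
    (integrable_comp_spikedVariance_mul id hp2) ?_
  rw [hw₂]
  set q₂ := (halfLineIntegrals fun x => x ^ 2 * p x).2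
  calc η * (c * q₂) * (∫ x, x ^ 2 * p x) ^ 2
      = c * q₂ * (η * (∫ x, x ^ 2 * p x) ^ 2) := by ring
    _ ≤ c * q₂ * ((1 - Real.exp (-α)) * (halfLineIntegrals p).1 * q₂ * a ^ 2) := by gcongr
    _ = c * (1 - Real.exp (-α)) * (halfLineIntegrals p).1 * a ^ 2 * q₂ ^ 2 := by ring
    _ ≤ (halfLineIntegrals fun x => spikedVariance p c α a x * (x ^ 2 * p x)).1 * q₂ ^ 2 := by
        gcongr

end Construction

theorem stmt19_general {p : ℝ → ℝ} (hp : ∀ x, 0 < p x) (hpi : Integrable p)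
    (hp1 : ∫ x, p x = 1) (hp2 : Integrable fun x => x ^ 2 * p x) (β η : ℝ) {σ α : ℝ}
    (hσ : 0 < σ) (hα : 0 < α) :
    ∃ (s : ℝ → ℝ) (γ : ℝ × ℝ), Measurable s ∧ (∀ x, 0 < s x) ∧ (∫ x, s x * p x) = σ ^ 2 ∧
      (∃ σ0 : ℝ, 0 < σ0 ∧ condGaussianKL p (fun x => x * β) (fun _ => σ0 ^ 2) s ≤ α) ∧
      (∀ γE, IsDispersionMinimizer (Leqml p s) γE ↔ γE = γ) ∧
      (∀ γG, IsDispersionMinimizer (Lgee p s) γG ↔ γG = γ) ∧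
      η ≤ Vsand p s γ / ⨅ γ : {γ : ℝ × ℝ // 0 < γ.1 ∧ 0 < γ.2}, Vsand p s γ.1 := by
  have hc : 0 < σ ^ 2 := by positivity
  have hP₁ := (halfLineIntegrals_pos hpi fun x _ => hp x).1
  have hq₂ := (halfLineIntegrals_pos hp2 fun x _ => mul_pos (by positivity) (hp x)).2
  have hexp : 0 < Real.exp α - 1 := sub_pos.2 (Real.one_lt_exp_iff.2 hα)
  have hexp_neg : 0 < 1 - Real.exp (-α) := sub_pos.2 (Real.exp_lt_one_iff.2 (neg_lt_zero.2 hα))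
  obtain ⟨a, ha, hlog, hlarge⟩ := exists_spike_location hpi hp (mul_pos hexp hP₁)
    (mul_pos (mul_pos hexp_neg hP₁) hq₂) hα (η * (∫ x, x ^ 2 * p x) ^ 2)
  have hs : ∀ x, 0 < spikedVariance p (σ ^ 2) α a x := spikedVariance_pos hp hc hα
  have hsp : Integrable fun x => spikedVariance p (σ ^ 2) α a x * p x :=
    integrable_comp_spikedVariance_mul id hpi
  have hs2p : Integrable fun x => spikedVariance p (σ ^ 2) α a x ^ 2 * p x :=
    integrable_comp_spikedVariance_mul (· ^ 2) hpi
  have hmeans := halfLineMeans_spikedVariance (c := σ ^ 2) (α := α) hpi hp ha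
  have hσ0 : (σ * Real.exp (-α / 2)) ^ 2 = σ ^ 2 * Real.exp (-α) := by
    rw [mul_pow, ← Real.exp_nat_mul]; congr 2; push_cast; ring
  refine ⟨spikedVariance p (σ ^ 2) α a, (σ ^ 2, σ ^ 2), measurable_threeStep, hs, ?_,
    ⟨σ * Real.exp (-α / 2), by positivity, ?_⟩, fun γ => ?_, fun γ => ?_, ?_⟩
  · rw [integral_spikedVariance_mul_density hpi hp ha, hp1, mul_one]
  · rw [hσ0]
    exact condGaussianKL_spikedVariance_le hpi hp hp1 (by fun_prop) hc hα ha hlog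
  · rw [isDispersionMinimizer_Leqml_iff hpi hsp hp hs, hmeans]
  · rw [isDispersionMinimizer_Lgee_iff hpi hsp hs2p hp hs, hmeans]
  · exact le_Vsand_spikedVariance_div_iInf hpi hp hp2 hc hα ha hlarge

/-- Proposition 1: EQML/GEE dispersion selection can be arbitrarily suboptimal,
for laws arbitrarily close to the homoscedastic Gaussian linear model. -/
theorem stmt19 (τ σ α η : ℝ) (hτ : 0 < τ) (hσ : 0 < σ) (hα : 0 < α) (hη : 1 ≤ η) :
    ∃ (p : ℝ → ℝ) (β : ℝ) (s : ℝ → ℝ),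
      Measurable p ∧ (∀ x, 0 < p x) ∧ (∫ x, p x) = 1 ∧
      Measurable s ∧ (∀ x, 0 < s x) ∧
      -- (ii) Var_P(X) = τ²
      (∫ x, x ^ 2 * p x) - (∫ x, x * p x) ^ 2 = τ ^ 2 ∧
      -- (iii) E_P[Var_P(Y|X)] = σ²
      (∫ x, s x * p x) = σ ^ 2 ∧
      -- (i) a homoscedastic law P̃ (same X-marginal, conditional variance σ₀²)
      -- with KL(P̃‖P) ≤ α
      (∃ σ0 : ℝ, 0 < σ0 ∧
        (∫ z : ℝ × ℝ,
          (p z.1 * npdf (z.1 * β) (σ0 ^ 2) z.2) *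
            Real.log ((p z.1 * npdf (z.1 * β) (σ0 ^ 2) z.2) /
              (p z.1 * npdf (z.1 * β) (s z.1) z.2))) ≤ α) ∧
      -- (iv) suboptimality ratio at least η for EQML- and GEE-optimal dispersions
      (∀ γE γG : ℝ × ℝ,
        (0 < γE.1 ∧ 0 < γE.2 ∧
          ∀ γ : ℝ × ℝ, 0 < γ.1 → 0 < γ.2 → Leqml p s γE ≤ Leqml p s γ) →
        (0 < γG.1 ∧ 0 < γG.2 ∧
          ∀ γ : ℝ × ℝ, 0 < γ.1 → 0 < γ.2 → Lgee p s γG ≤ Lgee p s γ) →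
        min (Vsand p s γE) (Vsand p s γG) /
            (⨅ γ : {γ : ℝ × ℝ // 0 < γ.1 ∧ 0 < γ.2}, Vsand p s γ.1) ≥ η) := by
  have hv : 0 < τ ^ 2 := by positivity
  obtain ⟨s, γ, hs, hs_pos, hs_mean, hKL, hE, hG, hη'⟩ := stmt19_general (npdf_pos hv)
    (integrable_npdf (m := 0) hv) (integral_npdf hv) (integrable_sq_mul_npdf hv) 0 η hσ hα
  refine ⟨npdf 0 (τ ^ 2), 0, s, by unfold npdf; fun_prop, npdf_pos hv, integral_npdf hv, hs,
    hs_pos, ?_, hs_mean, hKL, fun γE γG hγE hγG => ?_⟩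
  · rw [integral_sq_mul_npdf_zero hv, integral_id_mul_npdf hv]; ring
  · rwa [(hE γE).1 hγE, (hG γG).1 hγG, min_self]
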